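/- There exists a unique ζ₀ ∈ (0, π) such that φ(ζ₀) = 1, where φ(ζ) = (sin ζ / ζ)·(2 − cos ζ). -/

import Mathlib

open MeasureTheory Real Set Filter
open scoped ENNReal

noncomputable section

/-!
Clearing the denominator turns `φ(ζ) = 1` into `g(ζ) = 0` for `g(ζ) = sin ζ (2 - cos ζ) - ζ`, and
`g' = 2 cos (1 - cos)` changes sign only at `π / 2` on `(0, π)`. Hence `g` rises strictly from
`g(0) = 0` and then falls strictly to `g(π) = -π`, so it vanishes exactly once in `(0, π)`.
-/

theorem existsUnique_mem_Ioo_eq_of_strictMonoOn_of_strictAntiOn {α β : Type*}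
    [ConditionallyCompleteLinearOrder α] [DenselyOrdered α] [TopologicalSpace α] [OrderTopology α]
    [LinearOrder β] [TopologicalSpace β] [OrderClosedTopology β]
    {f : α → β} {a b c : α} {y : β} (hab : a < b) (hbc : b ≤ c)
    (hmono : StrictMonoOn f (Icc a b)) (hanti : StrictAntiOn f (Icc b c))
    (hcont : ContinuousOn f (Icc b c)) (hya : y ≤ f a) (hcy : f c < y) :
    ∃! x, x ∈ Ioo a c ∧ f x = y := by
  have y_lt_fb : y < f b :=
    hya.trans_lt (hmono (left_mem_Icc.2 hab.le) (right_mem_Icc.2 hab.le) hab)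
  have b_lt_of_root {x : α} (hax : a < x) (hx : f x = y) : b < x := by
    by_contra! hxb
    have fa_lt_y : f a < y := hx ▸ hmono (left_mem_Icc.2 hab.le) ⟨hax.le, hxb⟩ hax
    exact fa_lt_y.not_ge hya
  obtain ⟨z, hz, hfz⟩ := intermediate_value_Ioo' hbc hcont ⟨hcy, y_lt_fb⟩
  refine ⟨z, ⟨⟨hab.trans hz.1, hz.2⟩, hfz⟩, ?_⟩
  rintro x ⟨⟨hax, hxc⟩, hfx⟩
  exact hanti.injOn ⟨(b_lt_of_root hax hfx).le, hxc.le⟩ (Ioo_subset_Icc_self hz)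
    (hfx.trans hfz.symm)

/-- The function `ζ (φ(ζ) - 1)` with the denominator of `φ` cleared, so that it is smooth on all
of `ℝ`; on `(0, ∞)` its zeros are the solutions of `φ(ζ) = 1`. -/
def phiGap (ζ : ℝ) : ℝ := sin ζ * (2 - cos ζ) - ζ

theorem phiGap_eq_zero_iff {ζ : ℝ} (hζ : ζ ≠ 0) :
    phiGap ζ = 0 ↔ sin ζ / ζ * (2 - cos ζ) = 1 := by
  rw [phiGap, sub_eq_zero, div_mul_eq_mul_div, div_eq_one_iff_eq hζ]

theorem phiGap_zero : phiGap 0 = 0 := by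
  simp [phiGap]

theorem phiGap_pi : phiGap π = -π := by
  simp [phiGap]

theorem hasDerivAt_phiGap (ζ : ℝ) : HasDerivAt phiGap (2 * cos ζ * (1 - cos ζ)) ζ := by
  have h := ((hasDerivAt_sin ζ).mul ((hasDerivAt_cos ζ).const_sub 2)).sub (hasDerivAt_id ζ)
  refine h.congr_deriv ?_
  linear_combination sin_sq_add_cos_sq ζ

theorem continuous_phiGap : Continuous phiGap := by
  unfold phiGap
  fun_prop

theorem strictMonoOn_phiGap : StrictMonoOn phiGap (Icc 0 (π / 2)) := by
  refine strictMonoOn_of_deriv_pos (convex_Icc _ _) continuous_phiGap.continuousOn fun ζ hζ ↦ ?_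
  rw [interior_Icc] at hζ
  have hcos_pos : 0 < cos ζ := cos_pos_of_mem_Ioo ⟨by linarith [hζ.1, pi_pos], hζ.2⟩
  have hcos_lt_one : cos ζ < 1 := by
    simpa only [cos_zero] using
      cos_lt_cos_of_nonneg_of_le_pi le_rfl (by linarith [hζ.2, pi_pos]) hζ.1
  rw [(hasDerivAt_phiGap ζ).deriv]
  exact mul_pos (mul_pos two_pos hcos_pos) (sub_pos.2 hcos_lt_one)

theorem strictAntiOn_phiGap : StrictAntiOn phiGap (Icc (π / 2) π) := by
  refine strictAntiOn_of_deriv_neg (convex_Icc _ _) continuous_phiGap.continuousOn fun ζ hζ ↦ ?_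
  rw [interior_Icc] at hζ
  have hcos_neg : cos ζ < 0 := cos_neg_of_pi_div_two_lt_of_lt hζ.1 (by linarith [hζ.2, pi_pos])
  rw [(hasDerivAt_phiGap ζ).deriv]
  exact mul_neg_of_neg_of_pos (mul_neg_of_pos_of_neg two_pos hcos_neg) (by linarith)

theorem existsUnique_phiGap_eq_zero : ∃! ζ, ζ ∈ Ioo 0 π ∧ phiGap ζ = 0 :=
  existsUnique_mem_Ioo_eq_of_strictMonoOn_of_strictAntiOn pi_div_two_pos (half_le_self pi_pos.le)
    strictMonoOn_phiGap strictAntiOn_phiGap continuous_phiGap.continuousOn phiGap_zero.ge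
    (phiGap_pi.trans_lt (neg_neg_of_pos pi_pos))

/-- The equation `φ(ζ) = 1` with `φ(ζ) = (sin ζ / ζ)(2 − cos ζ)` has a
unique root in `(0, π)`. -/
theorem stmt12 :
    ∃! ζ₀ : ℝ, ζ₀ ∈ Set.Ioo 0 π ∧ (Real.sin ζ₀ / ζ₀) * (2 - Real.cos ζ₀) = 1 :=
  (existsUnique_congr fun _ ↦ and_congr_right fun hζ ↦ phiGap_eq_zero_iff hζ.1.ne').1
    existsUnique_phiGap_eq_zero
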